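/- arXiv:1903.10948 — 5 statements merged into one kernel-verified Lean document; each statement's English description precedes it below -/
import Mathlib

section
/- Let Φ be a kinematic-expansive, topologically transitive continuous flow on a compact metric space X. Then Φ has trivial C^0 ℝ-centralizer: for every continuous flow Ψ on X commuting with Φ there exists c ∈ ℝ such that ψ^t = φ^{ct} for all t ∈ ℝ. -/
/-!
By compactness, `ψ s` is uniformly close to the identity for small `s`. As `ψ s` commutes with `φ`,
kinematic expansivity at a point `x₀` with dense orbit gives `ψ s x₀ = φ τ x₀` for some small `τ`,
and both sides commute with `φ`, so `ψ s = φ τ` on all of `X` (`exists_small_time`).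

If `φ` has arbitrarily small positive periods, both flows are trivial and `c = 0` works. Otherwise
small times `τ` are determined by the map `φ τ`, so the times `τ n` attached to `s₀ / 2 ^ n` satisfy
`2 * τ (n + 1) = τ n`. Hence `ψ s = φ (c * s)` for `s = s₀ / 2 ^ n`, where `c = τ 0 / s₀`. The flow
`s ↦ ψ s ∘ φ (-(c * s))` thus has arbitrarily small positive periods, and it is trivial because its
periods form a closed subgroup of `ℝ` (`flow_eq_id_of_small_periods`).
-/

theorem flow_eq_id_of_small_periods {X : Type*} [TopologicalSpace X] [T2Space X]
    (χ : ℝ → X → X) (hc : ∀ x, Continuous fun t => χ t x) (h0 : ∀ x, χ 0 x = x)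
    (hadd : ∀ s t : ℝ, ∀ x, χ (s + t) x = χ s (χ t x))
    (hsmall : ∀ ε : ℝ, 0 < ε → ∃ s : ℝ, 0 < s ∧ s < ε ∧ ∀ x, χ s x = x) :
    ∀ s x, χ s x = x := by
  let K : AddSubgroup ℝ :=
    { carrier := {s | ∀ x, χ s x = x}
      zero_mem' := h0
      add_mem' := fun {a b} ha hb x => by rw [hadd, hb, ha]
      neg_mem' := fun {a} ha x => by
        have h := hadd (-a) a x
        rw [ha, neg_add_cancel, h0] at h
        exact h.symm }
  have hclosed : IsClosed (K : Set ℝ) := by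
    have : (K : Set ℝ) = ⋂ x, {s | χ s x = x} := by
      ext s; simp [K]
    rw [this]
    exact isClosed_iInter fun x => isClosed_eq (hc x) continuous_const
  have hdense : Dense (K : Set ℝ) := by
    refine AddSubgroup.dense_of_not_isolated_zero K fun ε hε => ?_
    obtain ⟨s, hs, hsε, h⟩ := hsmall ε hε
    exact ⟨s, h, hs, hsε⟩
  intro s
  have : s ∈ (K : Set ℝ) := by
    rw [← hclosed.closure_eq, hdense.closure_eq]; trivial
  exact this

theorem exists_uniformly_close {X : Type*} [MetricSpace X] [CompactSpace X]
    (ψ : ℝ → X → X) (hψc : Continuous fun p : ℝ × X => ψ p.1 p.2) (hψ0 : ∀ x, ψ 0 x = x)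
    (δ : ℝ) (hδ : 0 < δ) : ∃ η : ℝ, 0 < η ∧ ∀ s, |s| < η → ∀ x, dist (ψ s x) x < δ := by
  let F : C(ℝ × X, X) := ⟨fun p => ψ p.1 p.2, hψc⟩
  obtain ⟨η, hη, h⟩ := Metric.continuous_iff.1 F.curry.continuous 0 δ hδ
  refine ⟨η, hη, fun s hs x => ?_⟩
  have h1 := (ContinuousMap.dist_apply_le_dist x).trans_lt (h s (by simpa using hs))
  simpa [F, hψ0] using h1

/-- Small times of the commuting flow `ψ` are, as maps on all of `X`, small times of `φ`. -/
theorem exists_small_time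
    {X : Type*} [MetricSpace X] [CompactSpace X]
    (φ ψ : ℝ → X → X)
    (hφc : Continuous fun p : ℝ × X => φ p.1 p.2)
    (hφadd : ∀ s t : ℝ, ∀ x, φ (s + t) x = φ s (φ t x))
    (hke : ∀ ε : ℝ, 0 < ε → ∃ δ : ℝ, 0 < δ ∧ ∀ x y : X,
      (∀ t : ℝ, dist (φ t x) (φ t y) < δ) → ∃ t : ℝ, |t| < ε ∧ y = φ t x)
    (htrans : ∃ x : X, Dense {y : X | ∃ t : ℝ, 0 ≤ t ∧ y = φ t x})
    (hψc : Continuous fun p : ℝ × X => ψ p.1 p.2)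
    (hψ0 : ∀ x, ψ 0 x = x)
    (hcomm : ∀ s t : ℝ, ∀ x, φ t (ψ s x) = ψ s (φ t x)) (ε : ℝ) (hε : 0 < ε) :
    ∃ η : ℝ, 0 < η ∧ ∀ s, |s| < η → ∃ τ, |τ| < ε ∧ ∀ x, ψ s x = φ τ x := by
  obtain ⟨x₀, hx₀⟩ := htrans
  obtain ⟨δ, hδ, hsep⟩ := hke ε hε
  obtain ⟨η, hη, hclose⟩ := exists_uniformly_close ψ hψc hψ0 δ hδ
  refine ⟨η, hη, fun s hs => ?_⟩
  obtain ⟨τ, hτ, hx⟩ := hsep x₀ (ψ s x₀) fun t => by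
    rw [hcomm, dist_comm]; exact hclose s hs _
  refine ⟨τ, hτ, fun x => ?_⟩
  have hψs : Continuous (ψ s) := hψc.comp (Continuous.prodMk_right s)
  have hφτ : Continuous (φ τ) := hφc.comp (Continuous.prodMk_right τ)
  refine congrFun (Continuous.ext_on hx₀ hψs hφτ ?_) x
  rintro _ ⟨t, -, rfl⟩
  rw [← hcomm, hx, ← hφadd, ← hφadd, add_comm]

/-- A kinematic-expansive, topologically transitive continuous flow on a compact
metric space has trivial `C⁰` ℝ-centralizer: any commuting continuous flow is a
constant-time reparameterization. -/
theorem transitive_kinematic_expansive_trivial_R_centralizer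
    {X : Type*} [MetricSpace X] [CompactSpace X]
    (φ ψ : ℝ → X → X)
    (hφc : Continuous fun p : ℝ × X => φ p.1 p.2)
    (hφ0 : ∀ x, φ 0 x = x)
    (hφadd : ∀ s t : ℝ, ∀ x, φ (s + t) x = φ s (φ t x))
    (hke : ∀ ε : ℝ, 0 < ε → ∃ δ : ℝ, 0 < δ ∧ ∀ x y : X,
      (∀ t : ℝ, dist (φ t x) (φ t y) < δ) → ∃ t : ℝ, |t| < ε ∧ y = φ t x)
    (htrans : ∃ x : X, Dense {y : X | ∃ t : ℝ, 0 ≤ t ∧ y = φ t x})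
    (hψc : Continuous fun p : ℝ × X => ψ p.1 p.2)
    (hψ0 : ∀ x, ψ 0 x = x)
    (hψadd : ∀ s t : ℝ, ∀ x, ψ (s + t) x = ψ s (ψ t x))
    (hcomm : ∀ s t : ℝ, ∀ x, φ t (ψ s x) = ψ s (φ t x)) :
    ∃ c : ℝ, ∀ t : ℝ, ∀ x, ψ t x = φ (c * t) x := by
  have hmain := exists_small_time φ ψ hφc hφadd hke htrans hψc hψ0 hcomm
  have hneg : ∀ t x, φ t (φ (-t) x) = x := fun t x => by
    rw [← hφadd, add_neg_cancel, hφ0]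
  have hext : ∀ c : ℝ, (∀ ε : ℝ, 0 < ε → ∃ s : ℝ, 0 < s ∧ s < ε ∧ ∀ x, ψ s x = φ (c * s) x) →
      ∀ t x, ψ t x = φ (c * t) x := by
    intro c hc t x
    have key := flow_eq_id_of_small_periods (fun s x => ψ s (φ (-(c * s)) x))
      (fun x => hψc.comp (continuous_id.prodMk
        (hφc.comp ((by fun_prop : Continuous fun s : ℝ => -(c * s)).prodMk continuous_const))))
      (fun x => by simp [hψ0, hφ0])
      (fun s t x => by
        rw [hcomm, ← hφadd, ← hψadd]
        congr 2; ring)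
      (fun ε hε => by
        obtain ⟨s, hs, hsε, h⟩ := hc ε hε
        exact ⟨s, hs, hsε, fun x => by simp only [h, hneg]⟩)
    have h := key t (φ (c * t) x)
    simp only [← hφadd, neg_add_cancel, hφ0] at h
    exact h
  by_cases hK : ∀ ε : ℝ, 0 < ε → ∃ s : ℝ, 0 < s ∧ s < ε ∧ ∀ x, φ s x = x
  · have hid := flow_eq_id_of_small_periods φ
      (fun x => hφc.comp (Continuous.prodMk_left x)) hφ0 hφadd hK
    refine ⟨0, hext 0 fun ε hε => ?_⟩
    obtain ⟨η, hη, h⟩ := hmain 1 one_pos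
    have hm : 0 < min ε η := lt_min hε hη
    refine ⟨min ε η / 2, by linarith, by linarith [min_le_left ε η], fun x => ?_⟩
    obtain ⟨τ, -, hτ⟩ := h (min ε η / 2) (by
      rw [abs_of_pos (by linarith)]; linarith [min_le_right ε η])
    rw [hτ, hid, hid]
  · push Not at hK
    obtain ⟨ε, hε, hK⟩ := hK
    -- Times of size less than `ε / 3` make `2 * τ (n + 1) - τ n` smaller than every period.
    obtain ⟨η, hη, h⟩ := hmain (ε / 3) (by linarith)
    have hinj : ∀ a b : ℝ, |a - b| < ε → (∀ x, φ a x = φ b x) → a = b := by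
      have aux : ∀ a b : ℝ, |a - b| < ε → (∀ x, φ a x = φ b x) → ¬ b < a := by
        intro a b hab hx hlt
        obtain ⟨x, hne⟩ := hK (a - b) (by linarith) ((le_abs_self _).trans_lt hab)
        apply hne
        rw [sub_eq_add_neg, hφadd, hx, hneg]
      intro a b hab hx
      exact le_antisymm (not_lt.1 (aux a b hab hx))
        (not_lt.1 (aux b a (by rwa [abs_sub_comm]) fun x => (hx x).symm))
    have hs : ∀ n : ℕ, |η / 2 / 2 ^ n| < η := fun n => by
      rw [abs_of_pos (by positivity)]
      have : η / 2 / 2 ^ n ≤ η / 2 := div_le_self (by linarith) (one_le_pow₀ (by norm_num))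
      linarith
    choose τ hτ hψτ using fun n => h _ (hs n)
    have hhalf : ∀ n, 2 * τ (n + 1) = τ n := fun n => by
      refine hinj _ _ ?_ fun x => ?_
      · have h1 := abs_lt.1 (hτ n)
        have h2 := abs_lt.1 (hτ (n + 1))
        rw [abs_lt]; constructor <;> linarith
      · rw [two_mul, hφadd, ← hψτ, ← hψτ, ← hψτ, ← hψadd]
        congr 1; rw [pow_succ]; field_simp; norm_num
    have hτn : ∀ n, τ n = τ 0 / 2 ^ n := fun n => by
      induction n with
      | zero => simp
      | succ n ih =>
        have h1 := hhalf n
        rw [ih] at h1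
        rw [pow_succ, ← div_div, ← h1]; ring
    refine ⟨τ 0 / (η / 2), hext _ fun r hr => ?_⟩
    obtain ⟨n, hn⟩ := pow_unbounded_of_one_lt (η / 2 / r) (one_lt_two : (1 : ℝ) < 2)
    refine ⟨η / 2 / 2 ^ n, by positivity, ?_, fun x => ?_⟩
    · rw [div_lt_iff₀ hr] at hn
      rw [div_lt_iff₀ (by positivity)]; linarith
    · rw [hψτ, hτn]
      congr 1; field_simp
end

section
/- If Φ is a separating continuous flow on a compact metric space X, then Φ does not have arbitrarily small positive periods: there exists η > 0 such that whenever φ^p(x) = x for some x ∈ X and some p with 0 < p < η, the point x is a fixed point of Φ. -/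
/-!
Suppose nonfixed points `x n` had periods `p n → 0`. By compactness, `x n → a` along a subsequence.
Every point of the orbit of `x n` is `φ s (x n)` for some `s ∈ [0, p n)`, so continuity of the flow
at `(0, a)` forces the whole orbit of `x n` to converge to `a`, uniformly in time. Consequently `a`
is a fixed point, and for large `n` the orbits of `x n` and `a` stay `δ`-close for all times. Since
the flow is separating, `a` lies on the orbit of `x n`; but the orbit of the fixed point `a` is `{a}`,
so `x n = a` is fixed, a contradiction.
-/

open Filter Topology

/-- A separating continuous flow on a compact metric space does not have
arbitrarily small positive periods: any point of sufficiently small positive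
period is a fixed point. -/
theorem separating_flow_no_small_periods
    {X : Type*} [MetricSpace X] [CompactSpace X]
    (φ : ℝ → X → X)
    (hφc : Continuous fun p : ℝ × X => φ p.1 p.2)
    (hφ0 : ∀ x, φ 0 x = x)
    (hφadd : ∀ s t : ℝ, ∀ x, φ (s + t) x = φ s (φ t x))
    (hsep : ∃ δ : ℝ, 0 < δ ∧ ∀ x y : X,
      (∀ t : ℝ, dist (φ t x) (φ t y) < δ) → ∃ t : ℝ, y = φ t x) :
    ∃ η : ℝ, 0 < η ∧ ∀ (x : X) (p : ℝ), 0 < p → p < η → φ p x = x →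
      ∀ t : ℝ, φ t x = x := by
  obtain ⟨δ, hδ, hsep⟩ := hsep
  by_contra! hcon
  choose x p hp0 hp1 hper hnf using fun n : ℕ => hcon (1 / ((n : ℝ) + 1)) (by positivity)
  obtain ⟨a, u, hu, hxa⟩ := CompactSpace.tendsto_subseq x
  have hp : Tendsto (fun n => p (u n)) atTop (𝓝 0) :=
    (squeeze_zero (fun n => (hp0 n).le) (fun n => (hp1 n).le)
      tendsto_one_div_add_atTop_nhds_zero_nat).comp hu.tendsto_atTop
  -- The orbits of the points `x (u n)` converge to `a`, uniformly in time.
  have orbit_near : ∀ ε > 0, ∀ᶠ n in atTop, ∀ t, dist (φ t (x (u n))) a < ε := by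
    intro ε hε
    obtain ⟨r, hr, hcont⟩ := Metric.continuousAt_iff.1 (hφc.continuousAt (x := (0, a))) ε hε
    filter_upwards [hp.eventually (gt_mem_nhds hr), hxa.eventually (Metric.ball_mem_nhds a hr)]
      with n hpn hxn t
    have hperiodic : Function.Periodic (fun t => φ t (x (u n))) (p (u n)) := fun t => by
      simp only [hφadd, hper]
    obtain ⟨s, hs, hts⟩ := hperiodic.exists_mem_Ico₀ (hp0 _) t
    have hsr : dist s 0 < r := by
      rw [Real.dist_eq, sub_zero, abs_of_nonneg hs.1]
      exact hs.2.trans hpn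
    have := @hcont (s, x (u n)) (max_lt hsr hxn)
    simp only [hφ0] at this hts
    rwa [hts]
  have hafix : ∀ t, φ t a = a := by
    intro t
    have hcont : Continuous (φ t) := hφc.comp (Continuous.prodMk_right t)
    refine tendsto_nhds_unique ((hcont.tendsto a).comp hxa) ?_
    refine Metric.tendsto_nhds.2 fun ε hε => ?_
    filter_upwards [orbit_near ε hε] with n hn using hn t
  obtain ⟨n, hn⟩ := (orbit_near δ hδ).exists
  obtain ⟨t, ht⟩ := hsep (x (u n)) a fun t => by rw [hafix]; exact hn t
  have hxeq : x (u n) = a := by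
    rw [← hafix (-t), ht, ← hφadd, neg_add_cancel, hφ0]
  obtain ⟨s, hs⟩ := hnf (u n)
  exact hs (by rw [hxeq, hafix])
end

section
/- Let Φ and Ψ be continuous flows on a compact metric space X such that {ψ^t : t ∈ ℝ} = {φ^s : s ∈ ℝ} as sets of maps, and suppose that for every ε > 0 there exists δ > 0 such that d_{C^0}(φ^t, Id) < δ implies |t| < ε. Then there exists c ∈ ℝ such that ψ^t = φ^{ct} for all t ∈ ℝ. -/
/-!
The smallness hypothesis makes `t ↦ φ t` injective, so each `ψ t` equals `φ (a t)` for a unique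
real `a t`, and the group laws force `a` to be additive. By compactness of `X`, `ψ t → id`
uniformly as `t → 0`, so the smallness hypothesis also gives `a t → 0`. Thus `a` is a continuous
additive map `ℝ → ℝ`, hence `a t = a 1 * t`.
-/

/-- If two continuous flows on a compact metric space consist of the same set of
maps, and time-`t` maps of `φ` that are uniformly close to the identity have
small `t`, then the flows agree up to a constant linear time change. -/
theorem flows_equal_as_sets_are_linear_time_changes
    {X : Type*} [MetricSpace X] [CompactSpace X]
    (φ ψ : ℝ → X → X)
    (hφc : Continuous fun p : ℝ × X => φ p.1 p.2)
    (hφ0 : ∀ x, φ 0 x = x)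
    (hφadd : ∀ s t : ℝ, ∀ x, φ (s + t) x = φ s (φ t x))
    (hψc : Continuous fun p : ℝ × X => ψ p.1 p.2)
    (hψ0 : ∀ x, ψ 0 x = x)
    (hψadd : ∀ s t : ℝ, ∀ x, ψ (s + t) x = ψ s (ψ t x))
    (hrange : Set.range ψ = Set.range φ)
    (hsmall : ∀ ε : ℝ, 0 < ε → ∃ δ : ℝ, 0 < δ ∧ ∀ t : ℝ,
      (∀ x, dist (φ t x) x < δ) → |t| < ε) :
    ∃ c : ℝ, ∀ t : ℝ, ∀ x, ψ t x = φ (c * t) x := by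
  have hker : ∀ t, (∀ x, φ t x = x) → t = 0 := by
    intro t ht
    by_contra hne
    obtain ⟨δ, hδ, h⟩ := hsmall |t| (abs_pos.mpr hne)
    exact lt_irrefl _ (h t fun x => by rw [ht x, dist_self]; exact hδ)
  have hinj : ∀ s t, (∀ x, φ s x = φ t x) → s = t := by
    intro s t h
    refine sub_eq_zero.mp (hker (s - t) fun x => ?_)
    rw [sub_eq_neg_add, hφadd, h, ← hφadd, neg_add_cancel, hφ0]
  have hex : ∀ t, ∃ s, φ s = ψ t := fun t => by
    have : ψ t ∈ Set.range φ := hrange ▸ Set.mem_range_self t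
    exact this
  choose a ha using hex
  let f : ℝ →+ ℝ := AddMonoidHom.mk' a fun s t => hinj _ _ fun x => by
    rw [ha, hφadd, ha, ha, hψadd]
  have hunif : ∀ δ : ℝ, 0 < δ → ∀ᶠ t in nhds (0 : ℝ), ∀ x, dist (ψ t x) x < δ := by
    intro δ hδ
    have hc : Continuous fun p : ℝ × X => dist (ψ p.1 p.2) p.2 := hψc.dist continuous_snd
    have := isCompact_univ.eventually_forall_of_forall_eventually (x₀ := (0 : ℝ))
      (K := (Set.univ : Set X)) (P := fun t x => dist (ψ t x) x < δ) fun x _ =>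
        hc.continuousAt.eventually_lt continuousAt_const (by simpa [hψ0] using hδ)
    simpa using this
  have hf : Continuous f := by
    refine continuous_of_continuousAt_zero f ?_
    rw [ContinuousAt, map_zero, Metric.tendsto_nhds]
    intro ε hε
    obtain ⟨δ, hδ, h⟩ := hsmall ε hε
    filter_upwards [hunif δ hδ] with t ht
    rw [Real.dist_0_eq_abs]
    exact h (a t) fun x => by rw [ha]; exact ht x
  refine ⟨a 1, fun t x => ?_⟩
  have hlin : a t = a 1 * t := by
    have := map_real_smul f hf t 1
    simpa [f, mul_comm] using this
  rw [← hlin, ha]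
end

section
/- Let Φ be a topologically transitive, kinematic-expansive continuous flow on a compact metric space X, let ε > 0 and let δ > 0 be a separation constant for ε. If f : X → X is a homeomorphism commuting with Φ and d_{C^0}(f, Id) < δ, then f = φ^τ for some τ ∈ ℝ with |τ| < ε. -/
/-- Discrete centralizer: a homeomorphism commuting with a topologically
transitive kinematic-expansive flow that is within a separation constant of the
identity is a time-`τ` map of the flow, with `|τ| < ε`. -/
theorem transitive_kinematic_expansive_discrete_centralizer
    {X : Type*} [MetricSpace X] [CompactSpace X]
    (φ : ℝ → X → X)
    (hφc : Continuous fun p : ℝ × X => φ p.1 p.2)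
    (hφ0 : ∀ x, φ 0 x = x)
    (hφadd : ∀ s t : ℝ, ∀ x, φ (s + t) x = φ s (φ t x))
    (hke : ∀ ε' : ℝ, 0 < ε' → ∃ δ' : ℝ, 0 < δ' ∧ ∀ x y : X,
      (∀ t : ℝ, dist (φ t x) (φ t y) < δ') → ∃ t : ℝ, |t| < ε' ∧ y = φ t x)
    (htrans : ∃ x : X, Dense {y : X | ∃ t : ℝ, 0 ≤ t ∧ y = φ t x})
    (ε δ : ℝ) (hε : 0 < ε) (hδ : 0 < δ)
    (hsep : ∀ x y : X, (∀ t : ℝ, dist (φ t x) (φ t y) < δ) →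
      ∃ t : ℝ, |t| < ε ∧ y = φ t x)
    (f : X ≃ₜ X)
    (hcomm : ∀ t : ℝ, ∀ x, f (φ t x) = φ t (f x))
    (hclose : ∀ x, dist (f x) x < δ) :
    ∃ τ : ℝ, |τ| < ε ∧ ∀ x, f x = φ τ x := by
  obtain ⟨x, hx⟩ := htrans
  -- The orbits of `x` and `f x` stay `δ`-close, since `φ t (f x) = f (φ t x)`.
  obtain ⟨τ, hτ, hfx⟩ := hsep x (f x) fun t => by
    rw [← hcomm, dist_comm]
    exact hclose _
  have hτc : Continuous (φ τ) := hφc.comp (Continuous.prodMk_right τ)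
  -- `f` and `φ τ` agree at `x`, hence on its dense forward orbit, as both commute with the flow.
  refine ⟨τ, hτ, congrFun (f.continuous.ext_on hx hτc ?_)⟩
  rintro _ ⟨t, -, rfl⟩
  rw [hcomm, hfx, ← hφadd, ← hφadd, add_comm]
end

section
/- Let Φ be a continuous flow on a compact connected metric space X with at most countably many chain-components, each of which is topologically transitive (contains a point whose forward Φ-semiorbit is dense in that chain-component). Then every continuous Φ-invariant function h : X → ℝ is constant. -/
/-!
The `ω`-limit set of any point `x` is nonempty by compactness, lies in the level set of `h`
through `x`, and consists of chain-recurrent points (`exists_chainRecurrentPt_level`). Hence `h`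
takes each of its values on some chain-component. Since a transitive chain-component lies in the
closure of a single orbit, `h` is constant on it, so `h` takes only countably many values. The
range of `h` is also connected, and a countable connected subset of `ℝ` has at most one point.
-/

/-- A periodic ε-chain for the flow `φ`. -/
def IsPeriodicChain {X : Type*} [MetricSpace X] (φ : ℝ → X → X) (ε : ℝ)
    (g : ℝ → X) : Prop :=
  (∃ P : ℝ, 0 < P ∧ ∀ t : ℝ, g (t + P) = g t) ∧
  ∀ t τ : ℝ, |τ| < 1 → dist (g (t + τ)) (φ τ (g t)) < ε

/-- A point is chain recurrent if it lies on periodic ε-chains for every ε > 0. -/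
def ChainRecurrentPt {X : Type*} [MetricSpace X] (φ : ℝ → X → X) (x : X) : Prop :=
  ∀ ε : ℝ, 0 < ε → ∃ g : ℝ → X, IsPeriodicChain φ ε g ∧ g 0 = x

/-- Two chain-recurrent points are chain-equivalent if for every ε > 0 some
periodic ε-chain passes through both. -/
def ChainEquivPt {X : Type*} [MetricSpace X] (φ : ℝ → X → X) (x y : X) : Prop :=
  ChainRecurrentPt φ x ∧ ChainRecurrentPt φ y ∧
  ∀ ε : ℝ, 0 < ε → ∃ g : ℝ → X, IsPeriodicChain φ ε g ∧
    (∃ a : ℝ, g a = x) ∧ (∃ b : ℝ, g b = y)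

/-- The chain-components of a flow: the chain-equivalence classes. -/
def ChainComponents {X : Type*} [MetricSpace X] (φ : ℝ → X → X) : Set (Set X) :=
  {C | ∃ x : X, ChainRecurrentPt φ x ∧ C = {y | ChainEquivPt φ x y}}

/-- The maps `φ r` with `|r| ≤ 1` are uniformly equicontinuous. -/
lemma flow_equicontinuous {X : Type*} [MetricSpace X] [CompactSpace X] {φ : ℝ → X → X}
    (hφc : Continuous fun p : ℝ × X => φ p.1 p.2) {ε : ℝ} (hε : 0 < ε) :
    ∃ δ > 0, ∀ r : ℝ, |r| ≤ 1 → ∀ a b : X, dist a b < δ → dist (φ r a) (φ r b) < ε := by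
  have hu := ((isCompact_Icc (a := (-1 : ℝ)) (b := 1)).prod
    (isCompact_univ (X := X))).uniformContinuousOn_of_continuous hφc.continuousOn
  obtain ⟨δ, hδ, H⟩ := Metric.uniformContinuousOn_iff.1 hu ε hε
  refine ⟨δ, hδ, fun r hr a b hab => ?_⟩
  have hr' : r ∈ Set.Icc (-1 : ℝ) 1 := abs_le.1 hr
  exact H (r, a) ⟨hr', trivial⟩ (r, b) ⟨hr', trivial⟩ (by simpa [Prod.dist_eq] using hab)

/-- Closing up an orbit segment: if there are orbit segments of length `T ≥ 1` with both endpoints `y` and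
`φ T y` arbitrarily close to `p`, then `p` is chain recurrent. The periodic chain runs along the segment
and is reset to `p` at the multiples of `T`. -/
lemma chainRecurrentPt_of_near_return {X : Type*} [MetricSpace X] [CompactSpace X]
    {φ : ℝ → X → X} (hφc : Continuous fun p : ℝ × X => φ p.1 p.2) (hφ0 : ∀ x, φ 0 x = x)
    (hφadd : ∀ s t : ℝ, ∀ x, φ (s + t) x = φ s (φ t x)) {p : X}
    (hp : ∀ δ > 0, ∃ y : X, ∃ T : ℝ, 1 ≤ T ∧ dist y p < δ ∧ dist (φ T y) p < δ) :
    ChainRecurrentPt φ p := by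
  intro ε hε
  obtain ⟨δ, hδ, H⟩ := flow_equicontinuous hφc (show 0 < ε / 3 by positivity)
  obtain ⟨y, T, hT, hy, hyT⟩ := hp (min (δ / 2) (ε / 3)) (by positivity)
  obtain ⟨hy1, hy2⟩ := lt_min_iff.1 hy
  obtain ⟨hyT1, -⟩ := lt_min_iff.1 hyT
  have hT0 : 0 < T := by linarith
  have hret : dist (φ T y) y < δ := by
    linarith [dist_triangle_right (φ T y) y p]
  classical
  let w : ℝ → X := fun s => if s = 0 then p else φ s y
  have hw : ∀ s, dist (w s) (φ s y) < min δ (ε / 3) := by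
    intro s
    by_cases hs : s = 0
    · subst hs
      simp only [w, if_true, hφ0, dist_comm p y]
      exact lt_min (by linarith) hy2
    · simp only [w, hs, if_false, dist_self]
      positivity
  refine ⟨fun t => w (toIcoMod hT0 0 t), ⟨⟨T, hT0, fun t => by simp⟩, fun t τ hτ => ?_⟩,
    by simp [w]⟩
  have hs := toIcoMod_mem_Ico hT0 0 t
  have hs' := toIcoMod_mem_Ico hT0 0 (t + τ)
  have e1 := toIcoMod_add_toIcoDiv_zsmul hT0 0 t
  have e2 := toIcoMod_add_toIcoDiv_zsmul hT0 0 (t + τ)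
  dsimp only
  generalize toIcoMod hT0 0 t = s at *
  generalize toIcoMod hT0 0 (t + τ) = s' at *
  generalize toIcoDiv hT0 0 t = k at *
  generalize toIcoDiv hT0 0 (t + τ) = k' at *
  simp only [zsmul_eq_mul, zero_add, Set.mem_Ico] at *
  have hτ' := abs_lt.1 hτ
  have hk : s' = s + τ + (k - k' : ℤ) * T := by push_cast; linarith
  generalize k - k' = j at hk
  have hj1 : j < 2 := by
    by_contra hc
    have : (2 : ℝ) ≤ j := by exact_mod_cast not_lt.1 hc
    nlinarith
  have hj2 : -2 < j := by
    by_contra hc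
    have : (j : ℝ) ≤ -2 := by exact_mod_cast not_lt.1 hc
    nlinarith
  have hA : dist (φ τ (w s)) (φ (τ + s) y) < ε / 3 := by
    rw [hφadd]
    exact H τ hτ.le _ _ (lt_min_iff.1 (hw s)).1
  have hB : dist (φ s' y) (φ (τ + s) y) < ε / 3 := by
    obtain rfl | rfl | rfl : j = -1 ∨ j = 0 ∨ j = 1 := by omega
    · -- the chain crosses a multiple of `T` forwards
      push_cast at hk
      rw [show τ + s = s' + T by linarith, hφadd, dist_comm]
      exact H s' (abs_le.2 ⟨by linarith, by linarith⟩) _ _ hret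
    · rw [show s' = τ + s by push_cast at hk; linarith, dist_self]
      positivity
    · -- the chain crosses a multiple of `T` backwards
      push_cast at hk
      rw [show s' = (τ + s) + T by linarith, hφadd]
      exact H (τ + s) (abs_le.2 ⟨by linarith, by linarith⟩) _ _ hret
  have hC := (lt_min_iff.1 (hw s')).2
  have t1 := dist_triangle (w s') (φ s' y) (φ τ (w s))
  have t2 := dist_triangle_right (φ s' y) (φ τ (w s)) (φ (τ + s) y)
  linarith

/-- Every level set of a continuous invariant function contains a chain-recurrent point, namely
an `ω`-limit point of any of its elements. -/
lemma exists_chainRecurrentPt_level {X : Type*} [MetricSpace X] [CompactSpace X]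
    {φ : ℝ → X → X} (hφc : Continuous fun p : ℝ × X => φ p.1 p.2) (hφ0 : ∀ x, φ 0 x = x)
    (hφadd : ∀ s t : ℝ, ∀ x, φ (s + t) x = φ s (φ t x))
    {h : X → ℝ} (hhc : Continuous h) (hinv : ∀ t : ℝ, ∀ x, h (φ t x) = h x) (x : X) :
    ∃ p, ChainRecurrentPt φ p ∧ h p = h x := by
  obtain ⟨p, ψ, hψ, hlim⟩ := CompactSpace.tendsto_subseq fun n : ℕ => φ n x
  refine ⟨p, chainRecurrentPt_of_near_return hφc hφ0 hφadd fun δ hδ => ?_, ?_⟩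
  · obtain ⟨N, hN⟩ := Metric.tendsto_atTop.1 hlim δ hδ
    have hlt : ψ N + 1 ≤ ψ (N + 1) := hψ (Nat.lt_succ_self N)
    have hlt' : (ψ N : ℝ) + 1 ≤ ψ (N + 1) := by exact_mod_cast hlt
    refine ⟨φ (ψ N) x, ψ (N + 1) - ψ N, by linarith, hN N le_rfl, ?_⟩
    rw [← hφadd, sub_add_cancel]
    exact hN (N + 1) (Nat.le_succ N)
  · refine tendsto_nhds_unique ((hhc.tendsto p).comp hlim) ?_
    simp [Function.comp_def, hinv]

/-- A continuous invariant function of a continuous flow on a compact connected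
metric space with countably many chain-components, each topologically
transitive, is constant. -/
theorem invariant_function_constant_of_countable_transitive_chain_components
    {X : Type*} [MetricSpace X] [CompactSpace X] [ConnectedSpace X]
    (φ : ℝ → X → X)
    (hφc : Continuous fun p : ℝ × X => φ p.1 p.2)
    (hφ0 : ∀ x, φ 0 x = x)
    (hφadd : ∀ s t : ℝ, ∀ x, φ (s + t) x = φ s (φ t x))
    (hcount : (ChainComponents φ).Countable)
    (htrans : ∀ C ∈ ChainComponents φ, ∃ x ∈ C,
      C ⊆ closure {y : X | ∃ t : ℝ, 0 ≤ t ∧ y = φ t x})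
    (h : X → ℝ) (hhc : Continuous h) (hinv : ∀ t : ℝ, ∀ x, h (φ t x) = h x) :
    ∀ x y : X, h x = h y := by
  have hconst : ∀ C ∈ ChainComponents φ, (h '' C).Subsingleton := by
    intro C hC
    obtain ⟨x, -, hx⟩ := htrans C hC
    have hval : ∀ y ∈ C, h y = h x := by
      intro y hy
      refine closure_minimal (t := {y | h y = h x}) ?_
        (isClosed_eq hhc continuous_const) (hx hy)
      rintro _ ⟨t, -, rfl⟩
      exact hinv t x
    rintro _ ⟨a, ha, rfl⟩ _ ⟨b, hb, rfl⟩
    rw [hval a ha, hval b hb]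
  have hrange : (Set.range h).Countable := by
    refine (hcount.biUnion fun C hC => (hconst C hC).countable).mono ?_
    rintro _ ⟨x, rfl⟩
    obtain ⟨p, hp, hpx⟩ := exists_chainRecurrentPt_level hφc hφ0 hφadd hhc hinv x
    refine Set.mem_biUnion (x := {y | ChainEquivPt φ p y}) ⟨p, hp, rfl⟩ ⟨p, ?_, hpx⟩
    refine ⟨hp, hp, fun ε hε => ?_⟩
    obtain ⟨g, hg, hg0⟩ := hp ε hε
    exact ⟨g, hg, ⟨0, hg0⟩, ⟨0, hg0⟩⟩
  have hconn : IsPreconnected (Set.range h) := isPreconnected_range hhc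
  have key : ∀ x y, ¬ h x < h y := fun x y hlt =>
    (Cardinal.Real.Icc_countable_iff.not.2 (not_le.2 hlt))
      (hrange.mono (hconn.Icc_subset ⟨x, rfl⟩ ⟨y, rfl⟩))
  exact fun x y => le_antisymm (not_lt.1 (key y x)) (not_lt.1 (key x y))
end
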